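/- In G = ℚ ⋊ ℚ₊* with P = ℕ ⋊ ℕ₊*: for every (x,y) ∈ P there exists (w,z) ∈ P with (x,y) ≤ (w,z) such that every (u,v) ∈ P with (w,z) ≤ (u,v) satisfies (0,2) ≤ (u,v) or (1,2) ≤ (u,v). (Concretely, any (w,z) with z ∈ 2yℕ₊ and w ∈ x + yℕ works.) -/

import Mathlib

/-! Clearing denominators, `(x,y) ≤ (w,z)` says exactly that `w ∈ x + yℕ` and `z ∈ yℕ₊`
(`Qle_iff`). So if `z` is an even multiple of `y`, every `(u,v) ∈ P` above `(w,z)` has `v`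
even, and then `(0,2) ≤ (u,v)` or `(1,2) ≤ (u,v)` according to the parity of `u`
(`Qle_zero_or_one_two`). -/

/-- Multiplication in `ℚ ⋊ ℚ₊*`: `(x,y)(s,t) = (x + ys, yt)`. -/
def Qmul (g h : ℚ × ℚ) : ℚ × ℚ := (g.1 + g.2 * h.1, g.2 * h.2)

/-- Inversion in `ℚ ⋊ ℚ₊*`: `(x,y)⁻¹ = (-x/y, 1/y)`. -/
def Qinv (g : ℚ × ℚ) : ℚ × ℚ := (-g.1 / g.2, 1 / g.2)

/-- Membership in `P = ℕ ⋊ ℕ₊*`: first coordinate a nonnegative integer, second a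
positive integer. -/
def inP (g : ℚ × ℚ) : Prop :=
  (∃ n : ℕ, g.1 = (n : ℚ)) ∧ ∃ n : ℕ, 0 < n ∧ g.2 = (n : ℚ)

/-- The order on `G`: `g ≤ h` iff `g⁻¹h ∈ P`. -/
def Qle (g h : ℚ × ℚ) : Prop := inP (Qmul (Qinv g) h)

theorem Qle_iff {x y w z : ℚ} (hy : y ≠ 0) :
    Qle (x, y) (w, z) ↔ (∃ n : ℕ, w = x + y * n) ∧ ∃ n : ℕ, 0 < n ∧ z = y * n := by
  have h1 (n : ℕ) : -x / y + 1 / y * w = n ↔ w = x + y * n := by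
    field_simp
    constructor <;> intro h <;> linarith
  have h2 (n : ℕ) : 1 / y * z = n ↔ z = y * n := by
    field_simp
  simp only [Qle, inP, Qmul, Qinv, h1, h2]

theorem Qle_zero_or_one_two (u m : ℕ) (hm : 0 < m) :
    Qle ((0 : ℚ), (2 : ℚ)) ((u : ℚ), 2 * (m : ℚ)) ∨
      Qle ((1 : ℚ), (2 : ℚ)) ((u : ℚ), 2 * (m : ℚ)) := by
  rw [Qle_iff two_ne_zero, Qle_iff two_ne_zero]
  rcases Nat.even_or_odd' u with ⟨a, rfl | rfl⟩
  · exact Or.inl ⟨⟨a, by push_cast; ring⟩, m, hm, rfl⟩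
  · exact Or.inr ⟨⟨a, by push_cast; ring⟩, m, hm, rfl⟩

theorem stmt8 (x y : ℚ) (h : inP (x, y)) :
    (∃ w z : ℚ, inP (w, z) ∧ Qle (x, y) (w, z) ∧
      ∀ u v : ℚ, inP (u, v) → Qle (w, z) (u, v) →
        Qle ((0 : ℚ), (2 : ℚ)) (u, v) ∨ Qle ((1 : ℚ), (2 : ℚ)) (u, v)) ∧
    (∀ w z : ℚ, (∃ k : ℕ, 0 < k ∧ z = 2 * y * k) → (∃ k : ℕ, w = x + y * k) →
      inP (w, z) ∧ Qle (x, y) (w, z) ∧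
        ∀ u v : ℚ, inP (u, v) → Qle (w, z) (u, v) →
          Qle ((0 : ℚ), (2 : ℚ)) (u, v) ∨ Qle ((1 : ℚ), (2 : ℚ)) (u, v)) := by
  -- The existence claim is the case `(w,z) = (x, 2y)` of the concrete description.
  refine (fun H => ⟨⟨x, 2 * y, H x (2 * y) ⟨1, one_pos, by simp⟩ ⟨0, by simp⟩⟩, H⟩) ?_
  obtain ⟨⟨a, rfl : x = a⟩, b, hb, rfl : y = b⟩ := h
  rintro w z ⟨k, hk, rfl⟩ ⟨l, rfl⟩
  have hb' : (b : ℚ) ≠ 0 := by positivity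
  have hz : 2 * (b : ℚ) * k ≠ 0 := by positivity
  refine ⟨⟨⟨a + b * l, by push_cast; rfl⟩, 2 * b * k, by positivity, by push_cast; rfl⟩,
    (Qle_iff hb').2 ⟨⟨l, rfl⟩, 2 * k, by positivity, by push_cast; ring⟩, ?_⟩
  rintro u v ⟨⟨n, rfl : u = n⟩, -⟩ hle
  obtain ⟨-, m, hm, rfl⟩ := (Qle_iff hz).1 hle
  have hv : 2 * (b : ℚ) * k * m = 2 * ((b * k * m : ℕ) : ℚ) := by push_cast; ring
  rw [hv]
  exact Qle_zero_or_one_two n (b * k * m) (by positivity)
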